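/- For every integer n ≥ 1 and every real t, the probability generating function of the number of vertices satisfies E[t^{N_n}] = 1 + Σ_{ℓ=1}^{n} (−1)^ℓ·C(n,ℓ)·Π_{i=1}^{ℓ} (1 − 2t/(i(i+1))) = Σ_{k=1}^{n} t^k · Σ_{ℓ=k}^{n} (−1)^{ℓ+k}·C(n,ℓ)·c(k,ℓ). -/

import Mathlib

open MeasureTheory

noncomputable section

/-- The triangle with vertices (0,0), (1,0), (0,1). -/
def T : Set (ℝ × ℝ) := convexHull ℝ {(0, 0), (1, 0), (0, 1)}

/-- The uniform distribution on `T`: twice Lebesgue measure restricted to `T`. -/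
def μT : Measure (ℝ × ℝ) := (2 : ENNReal) • (volume.restrict T)

/-- Joint law of `n` independent uniform points in `T`. -/
def P (n : ℕ) : Measure (Fin n → ℝ × ℝ) := Measure.pi fun _ => μT

/-- The random convex chain: convex hull of the points together with `(1,0)` and `(0,1)`. -/
def Tchain (n : ℕ) (ω : Fin n → ℝ × ℝ) : Set (ℝ × ℝ) :=
  convexHull ℝ (Set.range ω ∪ {(1, 0), (0, 1)})

/-- Normalized area `V_n = 2 vol(T_n)`. -/
def V (n : ℕ) (ω : Fin n → ℝ × ℝ) : ℝ := 2 * (volume (Tchain n ω)).toReal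

/-- Number of vertices of `T_n` other than the two corners. -/
def N (n : ℕ) (ω : Fin n → ℝ × ℝ) : ℕ :=
  (Set.extremePoints ℝ (Tchain n ω)).ncard - 2

/-- Normalized moments `q_{n,k} = C(n+k,k) E[V_n^k]`. -/
def q (n k : ℕ) : ℝ := ((n + k).choose k : ℝ) * ∫ ω, (V n ω) ^ k ∂ P n

/-- Probability generating function of `N_n`. -/
def G (n : ℕ) (t : ℝ) : ℝ := ∫ ω, t ^ (N n ω) ∂ P n

/-- Harmonic number. -/
def H (j : ℕ) : ℝ := ∑ i ∈ Finset.range j, 1 / ((i : ℝ) + 1)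

/-- Generalized harmonic number of order 2. -/
def H2 (j : ℕ) : ℝ := ∑ i ∈ Finset.range j, 1 / ((i : ℝ) + 1) ^ 2

/-- `c(k,ℓ)`: elementary symmetric polynomial `e_k` of `2/(j(j+1))`, `j = 1,…,ℓ`. -/
def c (k l : ℕ) : ℝ :=
  ∑ S ∈ (Finset.Icc 1 l).powersetCard k, ∏ j ∈ S, 2 / ((j : ℝ) * ((j : ℝ) + 1))

lemma ax_sum_choose (l n : ℕ) :
    ∑ j ∈ Finset.range n, ((n : ℝ) - j) * (j.choose l : ℝ) = ((n + 1).choose (l + 2) : ℝ) := by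
  induction n with
  | zero => simp [Nat.choose_eq_zero_of_lt]
  | succ n ih =>
    have h1 : ∑ j ∈ Finset.range (n + 1), (j.choose l : ℝ) = ((n + 1).choose (l + 1) : ℝ) := by
      clear ih
      induction n with
      | zero =>
        rcases l with _ | l
        · simp
        · simp [Nat.choose_eq_zero_of_lt]
      | succ n ih =>
        rw [Finset.sum_range_succ, ih, Nat.choose_succ_succ (n + 1) l]
        push_cast; ring
    rw [Nat.choose_succ_succ (n + 1) (l + 1)]
    push_cast
    rw [← h1, ← ih]
    rw [Finset.sum_range_succ, Finset.sum_range_succ (n := n) (f := fun j => (j.choose l : ℝ))]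
    have : ∑ j ∈ Finset.range n, ((n : ℝ) + 1 - j) * (j.choose l : ℝ)
        = ∑ j ∈ Finset.range n, (((n : ℝ) - j) * (j.choose l : ℝ) + (j.choose l : ℝ)) :=
      Finset.sum_congr rfl fun j _ => by ring
    rw [this, Finset.sum_add_distrib]
    ring

/-- the product `r_l`. -/
def rr (t : ℝ) (l : ℕ) : ℝ := ∏ i ∈ Finset.Icc 1 l, (1 - 2 * t / ((i : ℝ) * ((i : ℝ) + 1)))

lemma rr_succ (t : ℝ) (l : ℕ) :
    rr t (l + 1) = rr t l * (1 - 2 * t / (((l : ℝ) + 1) * ((l : ℝ) + 2))) := by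
  unfold rr
  rw [Finset.prod_Icc_succ_top (by omega)]
  push_cast
  ring_nf

lemma alg_core (t : ℝ) (m : ℕ) :
    2 * t / (((m : ℝ) + 1) * (m + 2)) * ∑ j ∈ Finset.range (m + 1), ((m : ℝ) + 1 - j) *
      ∑ l ∈ Finset.range (m + 1), (-1 : ℝ) ^ l * (j.choose l : ℝ) * rr t l
    = ∑ l ∈ Finset.range (m + 2), (-1 : ℝ) ^ l * ((m + 1).choose l : ℝ) * rr t l := by
  have e1 : ∑ j ∈ Finset.range (m + 1), ((m : ℝ) + 1 - j) *
      ∑ l ∈ Finset.range (m + 1), (-1 : ℝ) ^ l * (j.choose l : ℝ) * rr t l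
      = ∑ l ∈ Finset.range (m + 1), (-1 : ℝ) ^ l * rr t l * ((m + 2).choose (l + 2) : ℝ) := by
    simp_rw [Finset.mul_sum]
    rw [Finset.sum_comm]
    refine Finset.sum_congr rfl fun l _ => ?_
    have := ax_sum_choose l (m + 1)
    rw [← this, Finset.mul_sum]
    refine Finset.sum_congr rfl fun j _ => ?_
    push_cast; ring
  rw [e1, Finset.mul_sum]
  have e2 : ∀ l ∈ Finset.range (m + 1), 2 * t / (((m : ℝ) + 1) * (m + 2)) *
      ((-1 : ℝ) ^ l * rr t l * ((m + 2).choose (l + 2) : ℝ))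
      = (-1 : ℝ) ^ l * (m.choose l : ℝ) * rr t l
        - (-1 : ℝ) ^ l * (m.choose l : ℝ) * rr t (l + 1) := by
    intro l _
    have h1 : ((m : ℝ) + 2) * ((m + 1).choose (l + 1) : ℝ) = ((m + 2).choose (l + 2) : ℝ) * (l + 2) := by
      exact_mod_cast Nat.add_one_mul_choose_eq (m + 1) (l + 1)
    have h2 : ((m : ℝ) + 1) * (m.choose l : ℝ) = ((m + 1).choose (l + 1) : ℝ) * (l + 1) := by
      exact_mod_cast Nat.add_one_mul_choose_eq m l
    have h3 : ((m + 2).choose (l + 2) : ℝ) =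
        ((m : ℝ) + 1) * (m + 2) * (m.choose l : ℝ) / ((l + 1) * (l + 2)) := by
      field_simp
      linear_combination (-(l : ℝ) - 1) * h1 - (m + 2) * h2
    rw [rr_succ, h3]
    field_simp
    ring
  rw [Finset.sum_congr rfl e2, Finset.sum_sub_distrib, Finset.sum_range_succ' _ (m + 1)]
  simp_rw [Nat.choose_succ_succ m]
  push_cast
  have e3 : ∀ l ∈ Finset.range (m + 1), (-1 : ℝ) ^ (l + 1) * ((m.choose l : ℝ) + m.choose l.succ) *
      rr t (l + 1) = -((-1 : ℝ) ^ l * (m.choose l : ℝ) * rr t (l + 1))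
        + (-1 : ℝ) ^ (l + 1) * (m.choose (l + 1)) * rr t (l + 1) := by
    intro l _
    rw [pow_succ]; simp only [Nat.succ_eq_add_one]; ring
  rw [Finset.sum_congr rfl e3, Finset.sum_add_distrib, Finset.sum_neg_distrib]
  have e4 := Finset.sum_range_succ' (fun l => (-1 : ℝ) ^ l * (m.choose l : ℝ) * rr t l) (m + 1)
  rw [Finset.sum_range_succ] at e4
  simp at e4 ⊢
  linarith

lemma alg (g : ℕ → ℝ) (t : ℝ) (h0 : g 0 = 1)
    (hrec : ∀ m : ℕ, g (m + 1) = 2 * t / (((m : ℝ) + 1) * (m + 2)) *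
      ∑ j ∈ Finset.range (m + 1), ((m : ℝ) + 1 - j) * g j) (n : ℕ) :
    g n = ∑ l ∈ Finset.range (n + 1), (-1 : ℝ) ^ l * (n.choose l : ℝ) * rr t l := by
  induction n using Nat.strong_induction_on with
  | _ n ih =>
    rcases n with _ | m
    · simp [h0, rr]
    · rw [hrec, ← alg_core]
      congr 1
      refine Finset.sum_congr rfl fun j hj => ?_
      have hj := Finset.mem_range.1 hj
      rw [ih j hj]
      congr 1
      apply Finset.sum_subset
      · intro x; simp; omega
      · intro x _ hx
        have : j < x := by simpa using hx
        simp [Nat.choose_eq_zero_of_lt this]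

lemma rr_expand (t : ℝ) (l : ℕ) :
    rr t l = ∑ k ∈ Finset.range (l + 1), (-1) ^ k * t ^ k * c k l := by
  unfold rr
  have : ∀ i ∈ Finset.Icc 1 l, (1 - 2 * t / ((i : ℝ) * ((i : ℝ) + 1)))
      = 1 + (-t) * (2 / ((i : ℝ) * ((i : ℝ) + 1))) := fun i _ => by ring
  rw [Finset.prod_congr rfl this, Finset.prod_one_add, Finset.sum_powerset]
  simp only [Nat.card_Icc, Nat.add_sub_cancel]
  refine Finset.sum_congr rfl fun k _ => ?_
  unfold c
  rw [Finset.mul_sum]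
  refine Finset.sum_congr rfl fun S hS => ?_
  rw [Finset.prod_mul_distrib, Finset.prod_const, (Finset.mem_powersetCard.1 hS).2, neg_pow]

lemma final_alg (n : ℕ) (hn : 1 ≤ n) (t : ℝ) (g : ℝ)
    (hg : g = ∑ l ∈ Finset.range (n + 1), (-1 : ℝ) ^ l * (n.choose l : ℝ) * rr t l) :
    (g = 1 + ∑ l ∈ Finset.Icc 1 n, (-1 : ℝ) ^ l * (n.choose l : ℝ) *
        ∏ i ∈ Finset.Icc 1 l, (1 - 2 * t / ((i : ℝ) * ((i : ℝ) + 1)))) ∧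
    (g = ∑ k ∈ Finset.Icc 1 n, t ^ k *
        ∑ l ∈ Finset.Icc k n, (-1 : ℝ) ^ (l + k) * (n.choose l : ℝ) * c k l) := by
  constructor
  · rw [hg, Finset.range_eq_Ico, Finset.sum_eq_sum_Ico_succ_bot (by omega)]
    simp [rr]
    rfl
  · have hz : ∑ l ∈ Finset.range (n + 1), (-1 : ℝ) ^ l * (n.choose l : ℝ) = 0 := by
      have := Int.alternating_sum_range_choose_of_ne (n := n) (by omega)
      exact_mod_cast this
    rw [hg]
    simp_rw [rr_expand, Finset.mul_sum]
    rw [Finset.sum_sigma', Finset.sum_sigma']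
    have hc0 : ∀ l, c 0 l = 1 := by intro l; simp [c]
    have : ∑ x ∈ (Finset.range (n + 1)).sigma fun l => Finset.range (l + 1),
        (-1 : ℝ) ^ x.1 * (n.choose x.1 : ℝ) * ((-1) ^ x.2 * t ^ x.2 * c x.2 x.1)
        = ∑ x ∈ (Finset.range (n + 1)).sigma fun k => Finset.Icc k n,
        t ^ x.1 * ((-1 : ℝ) ^ (x.2 + x.1) * (n.choose x.2 : ℝ) * c x.1 x.2) := by
      refine Finset.sum_nbij' (fun x => ⟨x.2, x.1⟩) (fun x => ⟨x.2, x.1⟩) ?_ ?_ ?_ ?_ ?_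
      · rintro ⟨a, b⟩; simp; omega
      · rintro ⟨a, b⟩; simp; omega
      · simp
      · simp
      · rintro ⟨a, b⟩ _; simp only [pow_add]; ring
    rw [this, Finset.sum_sigma, Finset.sum_sigma, Finset.range_eq_Ico,
      Finset.sum_eq_sum_Ico_succ_bot (by omega)]
    have h0 : ∑ l ∈ Finset.Icc 0 n, t ^ 0 * ((-1 : ℝ) ^ (l + 0) * (n.choose l : ℝ) * c 0 l) = 0 := by
      rw [← hz]
      refine Finset.sum_congr ?_ fun l _ => by rw [hc0]; simp
      ext; simp
    rw [h0, zero_add]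
    refine Finset.sum_congr ?_ fun _ _ => rfl
    ext; simp

/-- open triangle -/
def T0 : Set (ℝ × ℝ) := {q | 0 < q.1 ∧ 0 < q.2 ∧ q.1 + q.2 < 1}

/-- linear part -/
def affL (α β δ : ℝ) : (ℝ × ℝ) →ₗ[ℝ] (ℝ × ℝ) where
  toFun q := (α * q.1 + β * q.2, δ * q.2)
  map_add' a b := by ext <;> simp <;> ring
  map_smul' r a := by ext <;> simp <;> ring

/-- triangular affine map -/
def aff (α β γ δ : ℝ) : (ℝ × ℝ) →ᵃ[ℝ] (ℝ × ℝ) where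
  toFun q := (α * q.1 + β * q.2 + γ, δ * q.2)
  linear := affL α β δ
  map_vadd' a b := by ext <;> simp [affL] <;> ring

lemma aff_apply (α β γ δ : ℝ) (q : ℝ × ℝ) :
    aff α β γ δ q = (α * q.1 + β * q.2 + γ, δ * q.2) := rfl

lemma aff_injective {α β γ δ : ℝ} (hα : α ≠ 0) (hδ : δ ≠ 0) :
    Function.Injective (aff α β γ δ) := by
  rintro ⟨a, b⟩ ⟨a', b'⟩ h
  simp only [aff_apply, Prod.mk.injEq] at h
  have h2 : b = b' := mul_left_cancel₀ hδ h.2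
  subst h2
  have : a = a' := mul_left_cancel₀ hα (by linarith [h.1])
  rw [this]

lemma mem_hull_aff {f : (ℝ × ℝ) →ᵃ[ℝ] (ℝ × ℝ)} (hf : Function.Injective f) (x : ℝ × ℝ)
    (S : Set (ℝ × ℝ)) : x ∈ convexHull ℝ S ↔ f x ∈ convexHull ℝ (f '' S) := by
  rw [← AffineMap.image_convexHull, hf.mem_set_image]

lemma geo_a (S : Set (ℝ × ℝ)) (hS : ∀ q ∈ S, 0 < q.1) (β : ℝ) (hβ : 1 < β) :
    ((0, 1) : ℝ × ℝ) ∉ convexHull ℝ (S ∪ {(1, 0), (0, β)}) := by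
  intro h
  have hc : Convex ℝ {q : ℝ × ℝ | 0 < q.1 ∨ q = (0, β)} := by
    rintro x hx y hy a b ha hb hab
    have key : ∀ z : ℝ × ℝ, (0 < z.1 ∨ z = (0, β)) → 0 ≤ z.1 := by
      rintro z (h | h)
      · exact h.le
      · simp [h]
    have hx1 := key x hx
    have hy1 := key y hy
    rcases hx with hx | hx
    · rcases ha.eq_or_lt with ha | ha
      · have : b = 1 := by linarith
        simpa [← ha, this] using hy
      · left
        have := mul_pos ha hx
        have := mul_nonneg hb hy1
        simp; linarith
    · rcases hy with hy | hy
      · rcases hb.eq_or_lt with hb | hb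
        · have : a = 1 := by linarith
          right
          simp [← hb, this, hx]
        · left
          have := mul_pos hb hy
          have := mul_nonneg ha hx1
          simp; linarith
      · right
        rw [hx, hy, ← add_smul, hab, one_smul]
  have h2 := convexHull_min (t := {q : ℝ × ℝ | 0 < q.1 ∨ q = (0, β)}) ?_ hc h
  · simp at h2
    linarith
  · rintro q (hq | hq | hq)
    · exact Or.inl (hS q hq)
    · left; simp [hq]
    · right; exact hq

lemma geo_b (S : Set (ℝ × ℝ)) (hS : ∀ q ∈ S, q ∈ T0) (β : ℝ) (hβ : 1 < β)
    (x : ℝ × ℝ) (hx : x ∈ T0)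
    (h : x ∈ convexHull ℝ (insert (0, β) (S ∪ {(1, 0), (0, 1)}))) :
    x ∈ convexHull ℝ (S ∪ {(1, 0), (0, 1)}) := by
  rw [convexHull_insert ⟨(1, 0), by simp⟩] at h
  obtain ⟨z, hz, hxz⟩ : ∃ z ∈ convexHull ℝ (S ∪ {(1, 0), (0, 1)}), x ∈ segment ℝ (0, β) z := by
    simpa using h
  have hA : ((1, 0) : ℝ × ℝ) ∈ convexHull ℝ (S ∪ {(1, 0), (0, 1)}) :=
    subset_convexHull _ _ (by simp)
  have hB : ((0, 1) : ℝ × ℝ) ∈ convexHull ℝ (S ∪ {(1, 0), (0, 1)}) :=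
    subset_convexHull _ _ (by simp)
  have hzT : z ∈ {q : ℝ × ℝ | 0 ≤ q.1 ∧ q.1 + q.2 ≤ 1} := by
    refine convexHull_min ?_ ?_ hz
    · rintro q (hq | hq | hq)
      · have := hS q hq
        exact ⟨this.1.le, this.2.2.le⟩
      · simp [hq]
      · simp at hq; simp [hq]
    · rintro u hu v hv a b ha hb hab
      simp only [Set.mem_ofPred_eq] at hu hv ⊢
      simp
      constructor
      · have := mul_nonneg ha hu.1
        have := mul_nonneg hb hv.1
        linarith
      · nlinarith [mul_le_mul_of_nonneg_left hu.2 ha, mul_le_mul_of_nonneg_left hv.2 hb]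
  obtain ⟨a, b, ha, hb, hab, rfl⟩ := hxz
  obtain ⟨h1, h2, h3⟩ := hx
  simp at h1 h2 h3
  obtain ⟨hz1, hz2⟩ := hzT
  -- sum of z
  have hs : z.1 + z.2 < β := by linarith
  rcases ha.eq_or_lt with ha0 | ha0
  · have : b = 1 := by linarith
    simpa [← ha0, this] using hz
  set σ := z.1 + z.2 with hσ
  have hσ1 : σ < 1 := by
    by_contra hcon
    have : b * σ = b * z.1 + b * z.2 := by rw [hσ]; ring
    have : σ = 1 := by linarith
    nlinarith
  have hb1 : b = 1 - a := by linarith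
  -- coefficients: x = (1-ρ) z + ρ w
  set τ := (1 - σ) / (β - σ) with hτ
  have hβσ : 0 < β - σ := by linarith
  have hτ0 : 0 < τ := div_pos (by linarith) hβσ
  have hτ1 : τ ≤ 1 := by rw [hτ, div_le_one hβσ]; linarith
  have hτe : τ * (β - σ) = 1 - σ := by rw [hτ]; field_simp
  have haτ : a ≤ τ := by
    rw [hτ, le_div_iff₀ hβσ]
    have : b * σ = b * z.1 + b * z.2 := by rw [hσ]; ring
    rw [hb1] at this h3
    nlinarith
  have hw : ((1 - τ) * z.1) • ((1, 0) : ℝ × ℝ) + (1 - (1 - τ) * z.1) • ((0, 1) : ℝ × ℝ)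
      ∈ convexHull ℝ (S ∪ {(1, 0), (0, 1)}) := by
    apply (convex_convexHull ℝ _) hA hB
    · apply mul_nonneg <;> linarith
    · by_contra hcon
      have hz2' : z.2 < 0 ∨ 0 ≤ z.2 := lt_or_ge _ _
      nlinarith [mul_pos ha0 (lt_trans one_pos hβ)]
    · ring
  have hfin := (convex_convexHull ℝ (S ∪ {(1, 0), (0, 1)})) hz hw
    (a := 1 - a / τ) (b := a / τ) (by rw [sub_nonneg, div_le_one hτ0]; exact haτ)
    (by positivity) (by ring)
  convert hfin using 1
  have hz2e : z.2 = σ - z.1 := by rw [hσ]; ring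
  ext
  · simp [hb1]; field_simp; ring
  · simp [hb1, hz2e]; field_simp
    linear_combination a * hτe

lemma geo_c (β : ℝ) (hβ : 1 < β) (a b : ℝ) (ha : 0 < a) (h1 : 1 ≤ a + b)
    (h2 : β * a + b ≤ β) (S : Set (ℝ × ℝ)) (hS : {(0, 1), (1, 0), (0, β)} ⊆ S) :
    ((a, b) : ℝ × ℝ) ∈ convexHull ℝ S := by
  have hβ1 : 0 < β - 1 := by linarith
  have m1 := subset_convexHull ℝ S (hS (by simp : ((0, 1) : ℝ × ℝ) ∈ _))
  have m2 := subset_convexHull ℝ S (hS (by simp : ((1, 0) : ℝ × ℝ) ∈ _))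
  have m3 := subset_convexHull ℝ S (hS (by simp : ((0, β) : ℝ × ℝ) ∈ _))
  set w3 := (b + a - 1) / (β - 1) with hw3
  have e3 : w3 * (β - 1) = b + a - 1 := by rw [hw3]; field_simp
  have hw30 : 0 ≤ w3 := div_nonneg (by linarith) hβ1.le
  have hw1 : w3 ≤ 1 - a := by
    rw [hw3, div_le_iff₀ hβ1]; nlinarith
  have := (convex_convexHull ℝ S).sum_mem (t := Finset.univ) (w := ![1 - a - w3, a, w3])
    (z := ![(0, 1), (1, 0), (0, β)]) ?_ ?_ ?_
  · convert this using 1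
    simp [Fin.sum_univ_three]
    linarith
  · intro i _; fin_cases i <;> simp <;> linarith
  · simp [Fin.sum_univ_three]; ring
  · intro i _; fin_cases i <;> simp [m1, m2, m3]

lemma geo_norm {ι : Type*} (u : ι → ℝ × ℝ) (β : ℝ) (hβ : 1 < β)
    (hu : ∀ k, 0 < (u k).1 ∧ 0 < (u k).2 ∧ β * (u k).1 + (u k).2 ≤ β) (j : ι) :
    u j ∈ convexHull ℝ (insert (0, 1) (u '' {j}ᶜ) ∪ {(1, 0), (0, β)}) ↔
      (u j ∉ T0 ∨ u j ∈ convexHull ℝ (u '' {k | k ≠ j ∧ u k ∈ T0} ∪ {(1, 0), (0, 1)})) := by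
  constructor
  · intro h
    by_cases hj : u j ∈ T0
    · right
      apply geo_b _ _ β hβ _ hj
      · refine convexHull_min ?_ (convex_convexHull _ _) h
        have hsub : ({(0, 1), (1, 0), (0, β)} : Set (ℝ × ℝ)) ⊆
          insert (0, β) (u '' {k | k ≠ j ∧ u k ∈ T0} ∪ {(1, 0), (0, 1)}) := by
          rintro q (rfl | rfl | rfl) <;> simp
        rintro q ((hq | ⟨k, hk, rfl⟩) | hq)
        · apply subset_convexHull; apply hsub; simp [hq]
        · by_cases hkT : u k ∈ T0
          · apply subset_convexHull
            right; left
            exact ⟨k, ⟨hk, hkT⟩, rfl⟩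
          · obtain ⟨h1, h2, h3⟩ := hu k
            refine geo_c β hβ (u k).1 (u k).2 h1 ?_ h3 _ hsub
            by_contra hcon
            exact hkT ⟨h1, h2, by linarith⟩
        · apply subset_convexHull; apply hsub; right; exact hq
      · rintro q ⟨k, hk, rfl⟩; exact hk.2
    · exact Or.inl hj
  · rintro (h | h)
    · obtain ⟨h1, h2, h3⟩ := hu j
      refine geo_c β hβ (u j).1 (u j).2 h1 ?_ h3 _ ?_
      · by_contra hcon
        exact h ⟨h1, h2, by linarith⟩
      · rintro q (rfl | rfl | rfl) <;> simp
    · refine convexHull_mono ?_ h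
      rintro q (⟨k, hk, rfl⟩ | hq | hq)
      · left; right; exact ⟨k, hk.1, rfl⟩
      · right; left; exact hq
      · left; left; exact hq

/-- normalizing map -/
def phi (p : ℝ × ℝ) : (ℝ × ℝ) →ᵃ[ℝ] (ℝ × ℝ) :=
  aff ((1 - p.2) / (1 - p.1 - p.2)) (p.1 / (1 - p.1 - p.2)) (-p.1 / (1 - p.1 - p.2)) (1 / p.2)

/-- points with larger direction -/
def Rgt (p : ℝ × ℝ) : Set (ℝ × ℝ) := {q | p.1 * (1 - q.2) < q.1 * (1 - p.2)}

open Classical in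
/-- vertex indicator -/
def vI {ι : Type*} (ω : ι → ℝ × ℝ) (i : ι) : ℕ :=
  if ω i ∈ convexHull ℝ (ω '' {i}ᶜ ∪ {(1, 0), (0, 1)}) then 0 else 1

/-- vertex count -/
def Nv {ι : Type*} [Fintype ι] (ω : ι → ℝ × ℝ) : ℕ := ∑ i, vI ω i

lemma phi_inj {p : ℝ × ℝ} (hp : p ∈ T0) : Function.Injective (phi p) := by
  obtain ⟨h1, h2, h3⟩ := hp
  apply aff_injective
  · have : 0 < 1 - p.2 := by linarith
    have : 0 < 1 - p.1 - p.2 := by linarith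
    positivity
  · positivity

lemma phi_self {p : ℝ × ℝ} (hp : p ∈ T0) : phi p p = (0, 1) := by
  obtain ⟨h1, h2, h3⟩ := hp
  have h4 : 1 - p.1 - p.2 ≠ 0 := by linarith
  simp only [phi, aff_apply]
  ext
  · simp; field_simp; ring
  · simp; field_simp

lemma phi_A {p : ℝ × ℝ} (hp : p ∈ T0) : phi p (1, 0) = (1, 0) := by
  obtain ⟨h1, h2, h3⟩ := hp
  have h4 : 1 - p.1 - p.2 ≠ 0 := by linarith
  simp only [phi, aff_apply]
  ext
  · simp; field_simp; ring
  · simp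

lemma phi_B {p : ℝ × ℝ} (hp : p ∈ T0) : phi p (0, 1) = (0, 1 / p.2) := by
  obtain ⟨h1, h2, h3⟩ := hp
  have h4 : 1 - p.1 - p.2 ≠ 0 := by linarith
  simp only [phi, aff_apply]
  ext
  · simp; field_simp; ring
  · simp

lemma phi_fst (p q : ℝ × ℝ) :
    (phi p q).1 = (q.1 * (1 - p.2) - p.1 * (1 - q.2)) / (1 - p.1 - p.2) := by
  simp only [phi, aff_apply]; ring

lemma phi_snd (p q : ℝ × ℝ) : (phi p q).2 = q.2 / p.2 := by
  simp only [phi, aff_apply]; ring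

lemma phi_pos {p q : ℝ × ℝ} (hp : p ∈ T0) (hq : q ∈ T0) (hr : q ∈ Rgt p) :
    0 < (phi p q).1 ∧ 0 < (phi p q).2 ∧ 1 / p.2 * (phi p q).1 + (phi p q).2 ≤ 1 / p.2 := by
  obtain ⟨h1, h2, h3⟩ := hp
  obtain ⟨g1, g2, g3⟩ := hq
  have hr : p.1 * (1 - q.2) < q.1 * (1 - p.2) := hr
  have h4 : 0 < 1 - p.1 - p.2 := by linarith
  rw [phi_fst, phi_snd]
  refine ⟨div_pos (by linarith) h4, div_pos g2 h2, ?_⟩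
  have : (q.1 * (1 - p.2) - p.1 * (1 - q.2)) / (1 - p.1 - p.2) + q.2 ≤ 1 := by
    rw [← le_sub_iff_add_le, div_le_iff₀ h4]
    nlinarith
  calc _ = 1 / p.2 * ((q.1 * (1 - p.2) - p.1 * (1 - q.2)) / (1 - p.1 - p.2) + q.2) := by ring
    _ ≤ 1 / p.2 * 1 := by gcongr
    _ = _ := by ring

lemma phi_pre {p q : ℝ × ℝ} (hp : p ∈ T0) (h : phi p q ∈ T0) : q ∈ T0 ∧ q ∈ Rgt p := by
  obtain ⟨h1, h2, h3⟩ := hp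
  obtain ⟨g1, g2, g3⟩ := h
  have h4 : 0 < 1 - p.1 - p.2 := by linarith
  rw [phi_snd] at g2 g3
  rw [phi_fst] at g1 g3
  have e2 : 0 < q.2 := by
    have := mul_pos g2 h2
    rwa [div_mul_cancel₀ _ h2.ne'] at this
  have e1 : p.1 * (1 - q.2) < q.1 * (1 - p.2) := by
    have := mul_pos g1 h4
    rw [div_mul_cancel₀ _ h4.ne'] at this
    linarith
  have e3 : q.2 ≤ q.2 / p.2 := by
    rw [le_div_iff₀ h2]; nlinarith
  have e4 : (q.1 * (1 - p.2) - p.1 * (1 - q.2)) / (1 - p.1 - p.2) < 1 - q.2 := by linarith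
  rw [div_lt_iff₀ h4] at e4
  have e5 : q.1 + q.2 < 1 := by nlinarith
  have e6 : q.2 < 1 := by
    have : (q.1 * (1 - p.2) - p.1 * (1 - q.2)) / (1 - p.1 - p.2) > 0 := g1
    linarith
  refine ⟨⟨?_, e2, e5⟩, e1⟩
  have : 0 < p.1 * (1 - q.2) := mul_pos h1 (by linarith)
  by_contra hcon
  nlinarith

lemma geo_p {ι : Type*} (p : ℝ × ℝ) (hp : p ∈ T0) (ω : ι → ℝ × ℝ) (hω : ∀ j, ω j ∈ T0)
    (hr : ∀ j, ω j ∈ Rgt p) : p ∉ convexHull ℝ (Set.range ω ∪ {(1, 0), (0, 1)}) := by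
  rw [mem_hull_aff (phi_inj hp), phi_self hp, Set.image_union, Set.image_pair, phi_A hp, phi_B hp]
  apply geo_a
  · rintro _ ⟨_, ⟨j, rfl⟩, rfl⟩
    exact (phi_pos hp (hω j) (hr j)).1
  · rw [lt_div_iff₀ hp.2.1]; linarith [hp.1, hp.2.2]

lemma geo_j {ι : Type*} (p : ℝ × ℝ) (hp : p ∈ T0) (ω : ι → ℝ × ℝ) (hω : ∀ j, ω j ∈ T0)
    (hr : ∀ j, ω j ∈ Rgt p) (j : ι) :
    ω j ∈ convexHull ℝ (insert p (ω '' {j}ᶜ) ∪ {(1, 0), (0, 1)}) ↔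
      (phi p (ω j) ∉ T0 ∨ phi p (ω j) ∈ convexHull ℝ
        ((fun k => phi p (ω k)) '' {k | k ≠ j ∧ phi p (ω k) ∈ T0} ∪ {(1, 0), (0, 1)})) := by
  rw [mem_hull_aff (phi_inj hp), Set.image_union, Set.image_pair, phi_A hp, phi_B hp,
    Set.image_insert_eq, phi_self hp, Set.image_image]
  refine geo_norm (fun k => phi p (ω k)) (1 / p.2) ?_ ?_ j
  · rw [lt_div_iff₀ hp.2.1]; linarith [hp.1, hp.2.2]
  · intro k; exact phi_pos hp (hω k) (hr k)

open Classical in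
lemma Nv_rec {m : ℕ} (i : Fin (m + 1)) (p : ℝ × ℝ) (hp : p ∈ T0) (ω : Fin m → ℝ × ℝ)
    (hω : ∀ j, ω j ∈ T0) (hr : ∀ j, ω j ∈ Rgt p) (J : Finset (Fin m))
    (hJ : ∀ j, j ∈ J ↔ phi p (ω j) ∈ T0) :
    Nv (i.insertNth p ω : Fin (m + 1) → ℝ × ℝ) = 1 + Nv (fun k : {k // k ∈ J} => phi p (ω k)) := by
  unfold Nv
  rw [Fin.sum_univ_succAbove _ i]
  congr 1
  · unfold vI
    rw [if_neg]
    have : (i.insertNth p ω : Fin (m + 1) → ℝ × ℝ) '' {i}ᶜ = Set.range ω := by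
      ext q
      constructor
      · rintro ⟨k, hk, rfl⟩
        obtain ⟨l, rfl⟩ := Fin.exists_succAbove_eq (show k ≠ i from hk)
        simp
      · rintro ⟨l, rfl⟩
        exact ⟨i.succAbove l, by simp, by simp⟩
    rw [this, Fin.insertNth_apply_same]
    exact geo_p p hp ω hω hr
  · have h1 : ∀ j, vI (i.insertNth p ω : Fin (m + 1) → ℝ × ℝ) (i.succAbove j) =
        if j ∈ J then (if phi p (ω j) ∈ convexHull ℝ
          ((fun k => phi p (ω k)) '' {k | k ≠ j ∧ phi p (ω k) ∈ T0} ∪ {(1, 0), (0, 1)})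
          then 0 else 1) else 0 := by
      intro j
      unfold vI
      have : (i.insertNth p ω : Fin (m + 1) → ℝ × ℝ) '' {i.succAbove j}ᶜ
          = insert p (ω '' {j}ᶜ) := by
        ext q
        constructor
        · rintro ⟨k, hk, rfl⟩
          by_cases hki : k = i
          · subst hki; simp
          · obtain ⟨l, rfl⟩ := Fin.exists_succAbove_eq hki
            right
            refine ⟨l, ?_, by simp⟩
            rintro rfl
            exact hk rfl
        · rintro (rfl | ⟨l, hl, rfl⟩)
          · exact ⟨i, by simp, by simp⟩
          · refine ⟨i.succAbove l, ?_, by simp⟩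
            intro h
            exact hl (Fin.succAbove_right_injective h)
      rw [this, Fin.insertNth_apply_succAbove, geo_j p hp ω hω hr j]
      by_cases h1 : phi p (ω j) ∈ T0 <;> simp [h1, hJ]
    simp_rw [h1]
    rw [← Finset.sum_filter, Finset.filter_mem_eq_inter, Finset.univ_inter, ← Finset.sum_coe_sort J]
    refine Finset.sum_congr rfl fun j _ => ?_
    unfold vI
    have : (fun k : {k // k ∈ J} => phi p (ω k)) '' {j}ᶜ =
        (fun k => phi p (ω k)) '' {k | k ≠ (j : Fin m) ∧ phi p (ω k) ∈ T0} := by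
      ext q
      constructor
      · rintro ⟨k, hk, rfl⟩
        exact ⟨k, ⟨fun h => hk (Subtype.ext h), (hJ _).1 k.2⟩, rfl⟩
      · rintro ⟨k, ⟨hk, hk2⟩, rfl⟩
        exact ⟨⟨k, (hJ k).2 hk2⟩, fun h => hk (congrArg Subtype.val h), rfl⟩
    rw [this]

lemma mem_ext_iff (S : Set (ℝ × ℝ)) (hS : S.Finite) (x : ℝ × ℝ) :
    x ∈ Set.extremePoints ℝ (convexHull ℝ S) ↔ x ∈ S ∧ x ∉ convexHull ℝ (S \ {x}) := by
  constructor
  · intro h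
    refine ⟨extremePoints_convexHull_subset h, fun hx => ?_⟩
    have h2 := ((convex_convexHull ℝ S).mem_extremePoints_iff_mem_sdiff_convexHull_sdiff).1 h
    exact h2.2 (convexHull_mono (Set.sdiff_subset_sdiff_left (subset_convexHull ℝ S)) hx)
  · rintro ⟨h1, h2⟩
    by_contra hcon
    apply h2
    have hk := closure_convexHull_extremePoints (hS.isCompact_convexHull (𝕜 := ℝ)) (convex_convexHull ℝ S)
    have hsub : Set.extremePoints ℝ (convexHull ℝ S) ⊆ S \ {x} := by
      intro y hy
      refine ⟨extremePoints_convexHull_subset hy, ?_⟩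
      rintro rfl
      exact hcon hy
    have hfin : (Set.extremePoints ℝ (convexHull ℝ S)).Finite :=
      hS.subset extremePoints_convexHull_subset
    rw [(hfin.isClosed_convexHull (𝕜 := ℝ)).closure_eq] at hk
    refine convexHull_mono hsub ?_
    rw [hk]
    exact subset_convexHull ℝ S h1

lemma N_eq_Nv (n : ℕ) (ω : Fin n → ℝ × ℝ) (hinj : Function.Injective ω) (hT : ∀ i, ω i ∈ T0) :
    N n ω = Nv ω := by
  classical
  unfold N Tchain
  set S : Set (ℝ × ℝ) := Set.range ω ∪ {(1, 0), (0, 1)} with hSdef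
  have hS : S.Finite := (Set.finite_range ω).union (Set.toFinite _)
  have hA : ((1, 0) : ℝ × ℝ) ∉ convexHull ℝ (S \ {(1, 0)}) := by
    intro h
    have hc : Convex ℝ {q : ℝ × ℝ | q.1 < 1} :=
      convex_halfSpace_lt (f := fun q : ℝ × ℝ => q.1) (LinearMap.fst ℝ ℝ ℝ).isLinear 1
    have := convexHull_min (t := {q : ℝ × ℝ | q.1 < 1}) ?_ hc h
    · simp at this
    · rintro q ⟨⟨i, rfl⟩ | hq | hq, hq2⟩
      · obtain ⟨h1, h2, h3⟩ := hT i
        simp only [Set.mem_ofPred_eq]; linarith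
      · exact absurd hq hq2
      · simp at hq; simp [hq]
  have hB : ((0, 1) : ℝ × ℝ) ∉ convexHull ℝ (S \ {(0, 1)}) := by
    intro h
    have hc : Convex ℝ {q : ℝ × ℝ | q.2 < 1} :=
      convex_halfSpace_lt (f := fun q : ℝ × ℝ => q.2) (LinearMap.snd ℝ ℝ ℝ).isLinear 1
    have := convexHull_min (t := {q : ℝ × ℝ | q.2 < 1}) ?_ hc h
    · simp at this
    · rintro q ⟨⟨i, rfl⟩ | hq | hq, hq2⟩
      · obtain ⟨h1, h2, h3⟩ := hT i
        simp only [Set.mem_ofPred_eq]; linarith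
      · simp [hq]
      · exact absurd hq hq2
  have hne : ∀ i, ω i ∉ ({(1, 0), (0, 1)} : Set (ℝ × ℝ)) := by
    rintro i (h | h)
    · have := (hT i).2.1; rw [h] at this; simp at this
    · have := (hT i).1; simp at h; rw [h] at this; simp at this
  have hdiff : ∀ i, S \ {ω i} = ω '' {i}ᶜ ∪ {(1, 0), (0, 1)} := by
    intro i
    ext q
    constructor
    · rintro ⟨⟨j, rfl⟩ | hq, hq2⟩
      · left
        exact ⟨j, fun h => hq2 (by rw [show j = i from h]; rfl), rfl⟩
      · right; exact hq
    · rintro (⟨j, hj, rfl⟩ | hq)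
      · exact ⟨Or.inl ⟨j, rfl⟩, fun h => hj (hinj h)⟩
      · refine ⟨Or.inr hq, ?_⟩
        rintro rfl
        exact hne i hq
  have hext : Set.extremePoints ℝ (convexHull ℝ S) =
      ω '' ((Finset.univ.filter fun i => vI ω i = 1 : Finset (Fin n)) : Set (Fin n))
        ∪ {(1, 0), (0, 1)} := by
    ext x
    rw [mem_ext_iff S hS]
    constructor
    · rintro ⟨⟨i, rfl⟩ | hx, h2⟩
      · left
        refine ⟨i, ?_, rfl⟩
        rw [hdiff] at h2
        simp only [Finset.coe_filter, Finset.mem_univ, true_and, Set.mem_ofPred_eq]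
        unfold vI
        rw [if_neg h2]
      · right; exact hx
    · rintro (⟨i, hi, rfl⟩ | hx)
      · refine ⟨Or.inl ⟨i, rfl⟩, ?_⟩
        rw [hdiff]
        intro h
        simp only [Finset.coe_filter, Finset.mem_univ, true_and, Set.mem_ofPred_eq] at hi
        unfold vI at hi
        rw [if_pos h] at hi
        exact absurd hi (by simp)
      · refine ⟨Or.inr hx, ?_⟩
        rcases hx with rfl | rfl
        · exact hA
        · exact hB
  rw [hext, Set.ncard_union_eq]
  · rw [Set.ncard_image_of_injective _ hinj, Set.ncard_coe_finset, Set.ncard_pair (by simp)]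
    rw [Nat.add_sub_cancel, Finset.card_filter]
    unfold Nv
    refine Finset.sum_congr rfl fun i _ => ?_
    unfold vI
    split_ifs <;> simp_all
  · rw [Set.disjoint_left]
    rintro _ ⟨i, _, rfl⟩
    exact hne i

lemma mem_hull_range {κ : Type*} [Fintype κ] (f : κ → ℝ × ℝ) (x : ℝ × ℝ) :
    x ∈ convexHull ℝ (Set.range f) ↔ ∃ w ∈ stdSimplex ℝ κ, ∑ k, w k • f k = x := by
  classical
  constructor
  · intro h
    have hc : Convex ℝ ((Fintype.linearCombination ℝ f) '' (stdSimplex ℝ κ)) :=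
      (convex_stdSimplex ℝ κ).linear_image _
    have := convexHull_min ?_ hc h
    · obtain ⟨w, hw, rfl⟩ := this
      exact ⟨w, hw, by simp [Fintype.linearCombination_apply]⟩
    · rintro _ ⟨k, rfl⟩
      exact ⟨Pi.single k 1, single_mem_stdSimplex ℝ k, by simp⟩
  · rintro ⟨w, hw, rfl⟩
    exact (convex_convexHull ℝ _).sum_mem (fun i _ => hw.1 i) hw.2
      (fun i _ => subset_convexHull ℝ _ ⟨i, rfl⟩)

lemma isClosed_hull {X κ : Type*} [TopologicalSpace X] [Fintype κ] (f : X → κ → ℝ × ℝ)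
    (hf : Continuous f) (g : X → ℝ × ℝ) (hg : Continuous g) :
    IsClosed {x | g x ∈ convexHull ℝ (Set.range (f x))} := by
  have hK : CompactSpace (stdSimplex ℝ κ) := isCompact_iff_compactSpace.1 (isCompact_stdSimplex ℝ κ)
  have hcl : IsClosed {z : stdSimplex ℝ κ × X | ∑ k, (z.1 : κ → ℝ) k • f z.2 k = g z.2} := by
    apply isClosed_eq
    · refine continuous_finsetSum _ fun k _ => ?_
      have h1 : Continuous fun z : stdSimplex ℝ κ × X => (z.1 : κ → ℝ) k :=
        (continuous_apply k).comp (continuous_subtype_val.comp continuous_fst)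
      have h2 : Continuous fun z : stdSimplex ℝ κ × X => f z.2 k :=
        (continuous_apply k).comp (hf.comp continuous_snd)
      exact h1.smul h2
    · fun_prop
  have := isClosedMap_snd_of_compactSpace _ hcl
  convert this using 1
  ext x
  simp only [Set.mem_ofPred_eq, mem_hull_range, Set.mem_image, Prod.exists]
  constructor
  · rintro ⟨w, hw, h⟩
    exact ⟨⟨w, hw⟩, x, h, rfl⟩
  · rintro ⟨w, y, h, rfl⟩
    exact ⟨w, w.2, h⟩

lemma measurable_vI {ι : Type*} [Fintype ι] (i : ι) :
    Measurable (fun ω : ι → ℝ × ℝ => vI ω i) := by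
  classical
  unfold vI
  apply Measurable.ite _ measurable_const measurable_const
  have := isClosed_hull (X := ι → ℝ × ℝ) (κ := {k // k ≠ i} ⊕ Bool)
    (fun ω k => Sum.elim (fun l : {k // k ≠ i} => ω l) (fun b : Bool => if b then (1, 0) else (0, 1)) k)
    (by
      apply continuous_pi
      rintro (k | b)
      · simp only [Sum.elim_inl, Sum.elim_inr]; fun_prop
      · simp only [Sum.elim_inl, Sum.elim_inr]; fun_prop) (fun ω => ω i) (by fun_prop)
  convert this.measurableSet using 5
  ext q
  constructor
  · rintro (⟨k, hk, rfl⟩ | rfl | rfl)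
    · exact ⟨Sum.inl ⟨k, hk⟩, rfl⟩
    · exact ⟨Sum.inr true, by simp⟩
    · exact ⟨Sum.inr false, by simp⟩
  · rintro ⟨k | b, rfl⟩
    · left; exact ⟨k, k.2, rfl⟩
    · cases b <;> simp

lemma measurable_Nv {ι : Type*} [Fintype ι] : Measurable (fun ω : ι → ℝ × ℝ => Nv ω) := by
  unfold Nv
  exact Finset.measurable_sum _ fun i _ => measurable_vI i

lemma Nv_le {ι : Type*} [Fintype ι] (ω : ι → ℝ × ℝ) : Nv ω ≤ Fintype.card ι := by
  unfold Nv
  calc ∑ i, vI ω i ≤ ∑ _i : ι, 1 := Finset.sum_le_sum fun i _ => by unfold vI; split_ifs <;> simp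
    _ = _ := by simp

lemma Nv_equiv {ι κ : Type*} [Fintype ι] [Fintype κ] (e : ι ≃ κ) (ω : κ → ℝ × ℝ) :
    Nv (fun i => ω (e i)) = Nv ω := by
  unfold Nv
  rw [← e.sum_comp]
  refine Finset.sum_congr rfl fun i _ => ?_
  unfold vI
  have : (fun i => ω (e i)) '' {i}ᶜ = ω '' {e i}ᶜ := by
    rw [show (fun i => ω (e i)) = ω ∘ e from rfl, Set.image_comp]
    congr 1
    rw [Set.image_compl_eq e.bijective, Set.image_singleton]
  rw [this]

lemma measurableSet_T0 : MeasurableSet T0 := by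
  unfold T0
  apply MeasurableSet.inter
  · exact measurableSet_lt measurable_const measurable_fst
  apply MeasurableSet.inter
  · exact measurableSet_lt measurable_const measurable_snd
  · exact measurableSet_lt (measurable_fst.add measurable_snd) measurable_const

lemma line_null (a b k : ℝ) (hb : b ≠ 0) : volume {q : ℝ × ℝ | a * q.1 + b * q.2 = k} = 0 := by
  have hm : MeasurableSet {q : ℝ × ℝ | a * q.1 + b * q.2 = k} :=
    measurableSet_eq_fun (by fun_prop) (by fun_prop)
  rw [Measure.volume_eq_prod, Measure.measure_prod_null hm]
  refine Filter.Eventually.of_forall fun x => ?_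
  have : (Prod.mk x ⁻¹' {q : ℝ × ℝ | a * q.1 + b * q.2 = k}) ⊆ {(k - a * x) / b} := by
    intro y hy
    have hy : a * x + b * y = k := hy
    simp only [Set.mem_singleton_iff]
    field_simp
    linarith
  exact measure_mono_null this (by simp)

lemma T_ae : T =ᵐ[volume] T0 := by
  have h1 : T0 ⊆ T := by
    rintro ⟨a, b⟩ ⟨h1, h2, h3⟩
    simp only at h1 h2 h3
    unfold T
    have := (convex_convexHull ℝ ({(0, 0), (1, 0), (0, 1)} : Set (ℝ × ℝ))).sum_mem
      (t := Finset.univ) (w := ![1 - a - b, a, b]) (z := ![(0, 0), (1, 0), (0, 1)]) ?_ ?_ ?_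
    · convert this using 1
      simp [Fin.sum_univ_three]
    · intro i _; fin_cases i <;> simp <;> linarith
    · simp [Fin.sum_univ_three]; ring
    · intro i _; apply subset_convexHull; fin_cases i <;> simp
  have h2 : T ⊆ {q | 0 ≤ q.1 ∧ 0 ≤ q.2 ∧ q.1 + q.2 ≤ 1} := by
    refine convexHull_min ?_ ?_
    · rintro q (rfl | rfl | rfl) <;> simp
    · rintro u hu v hv a b ha hb hab
      simp only [Set.mem_ofPred_eq] at hu hv ⊢
      have := mul_nonneg ha hu.1
      have := mul_nonneg hb hv.1
      have := mul_nonneg ha hu.2.1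
      have := mul_nonneg hb hv.2.1
      simp
      refine ⟨by linarith, by linarith, ?_⟩
      nlinarith [mul_le_mul_of_nonneg_left hu.2.2 ha, mul_le_mul_of_nonneg_left hv.2.2 hb]
  have h0 : volume {q : ℝ × ℝ | q.1 = 0} = 0 := by
    have : {q : ℝ × ℝ | q.1 = 0} = ({0} : Set ℝ) ×ˢ Set.univ := by ext; simp
    rw [this, Measure.volume_eq_prod, Measure.prod_prod]; simp
  have hd : volume (T \ T0) = 0 := by
    refine measure_mono_null (t := {q : ℝ × ℝ | q.1 = 0} ∪ ({q : ℝ × ℝ | 0 * q.1 + 1 * q.2 = 0} ∪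
      {q : ℝ × ℝ | 1 * q.1 + 1 * q.2 = 1})) ?_ ?_
    · rintro q ⟨hq, hq2⟩
      obtain ⟨g1, g2, g3⟩ := h2 hq
      by_contra hcon
      apply hq2
      simp only [Set.mem_union, Set.mem_ofPred_eq, not_or] at hcon
      obtain ⟨k1, k2, k3⟩ := hcon
      refine ⟨lt_of_le_of_ne g1 (Ne.symm k1), lt_of_le_of_ne g2 fun h => k2 ?_,
        lt_of_le_of_ne g3 fun h => k3 ?_⟩ <;> linarith
    · rw [measure_union_null_iff, measure_union_null_iff]
      exact ⟨h0, line_null _ _ _ (by norm_num), line_null _ _ _ (by norm_num)⟩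
  exact (ae_le_set.2 hd).antisymm h1.eventuallyLE

lemma muT_eq : μT = (2 : ENNReal) • (volume.restrict T0) := by
  unfold μT
  rw [Measure.restrict_congr_set T_ae]

lemma vol_T0 : volume T0 = ENNReal.ofReal (1 / 2) := by
  have : T0 = regionBetween (fun _ => 0) (fun x => 1 - x) (Set.Ioo 0 1) := by
    ext q
    simp only [T0, regionBetween, Set.mem_ofPred_eq, Set.mem_Ioo]
    constructor
    · rintro ⟨h1, h2, h3⟩; refine ⟨⟨h1, ?_⟩, h2, ?_⟩ <;> linarith
    · rintro ⟨⟨h1, h4⟩, h2, h3⟩; refine ⟨h1, h2, ?_⟩; linarith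
  rw [this, Measure.volume_eq_prod, volume_regionBetween_eq_integral]
  · congr 1
    rw [← integral_Ioc_eq_integral_Ioo, ← intervalIntegral.integral_of_le zero_le_one]
    simp only [Pi.sub_apply, sub_zero]
    rw [intervalIntegral.integral_sub (by simp) (by simp), integral_id]
    norm_num
  · simp
  · exact (Continuous.integrableOn_Icc (by fun_prop)).mono_set Set.Ioo_subset_Icc_self
  · exact measurableSet_Ioo
  · intro x hx; simpa using hx.2.le

instance : IsProbabilityMeasure μT := ⟨by
  rw [muT_eq]
  simp only [Measure.smul_apply, Measure.restrict_apply_univ, vol_T0, smul_eq_mul]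
  rw [show (2 : ENNReal) = ENNReal.ofReal 2 by simp, ← ENNReal.ofReal_mul (by norm_num)]
  norm_num⟩

lemma ae_T0 : ∀ᵐ q ∂μT, q ∈ T0 := by
  rw [muT_eq]
  exact Measure.ae_smul_measure (ae_restrict_mem measurableSet_T0) _

lemma muT_line (a b k : ℝ) (hb : b ≠ 0) : μT {q : ℝ × ℝ | a * q.1 + b * q.2 = k} = 0 := by
  rw [muT_eq, Measure.smul_apply,
    measure_mono_null subset_rfl (Measure.absolutelyContinuous_of_le Measure.restrict_le_self
      (line_null a b k hb))]
  simp

lemma int_muT (f : ℝ × ℝ → ℝ) (hf : IntegrableOn f T0 volume) :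
    ∫ q, f q ∂μT = 2 * ∫ y in (0 : ℝ)..1, ∫ x in (0 : ℝ)..(1 - y), f (x, y) := by
  rw [muT_eq, integral_smul_measure]
  simp only [ENNReal.toReal_ofNat, smul_eq_mul]
  congr 1
  rw [← integral_indicator measurableSet_T0, Measure.volume_eq_prod, integral_prod_symm]
  · rw [intervalIntegral.integral_of_le zero_le_one, integral_Ioc_eq_integral_Ioo,
      ← integral_indicator measurableSet_Ioo]
    congr 1
    ext y
    by_cases hy : y ∈ Set.Ioo (0 : ℝ) 1
    · rw [Set.indicator_of_mem hy, intervalIntegral.integral_of_le (by linarith [hy.2]),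
        integral_Ioc_eq_integral_Ioo, ← integral_indicator measurableSet_Ioo]
      congr 1
      ext x
      by_cases hx : x ∈ Set.Ioo (0 : ℝ) (1 - y)
      · rw [Set.indicator_of_mem hx, Set.indicator_of_mem]
        exact ⟨hx.1, hy.1, by simp; linarith [hx.2]⟩
      · rw [Set.indicator_of_notMem hx, Set.indicator_of_notMem]
        rintro ⟨h1, h2, h3⟩
        simp only at h1 h3
        exact hx ⟨h1, by linarith⟩
    · rw [Set.indicator_of_notMem hy]
      convert integral_zero ℝ ℝ with x
      rw [Set.indicator_of_notMem]
      rintro ⟨h1, h2, h3⟩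
      simp only at h1 h2 h3
      exact hy ⟨h2, by linarith⟩
  · rw [← Measure.volume_eq_prod]
    exact hf.integrable_indicator measurableSet_T0

lemma det_affL (α β δ : ℝ) : LinearMap.det (affL α β δ) = α * δ := by
  have : affL α β δ = Matrix.toLin (Module.Basis.finTwoProd ℝ) (Module.Basis.finTwoProd ℝ)
      !![α, β; 0, δ] := by
    apply LinearMap.ext
    intro q
    rw [Matrix.toLin_finTwoProd_apply]
    simp [affL]
  rw [this, LinearMap.det_toLin, Matrix.det_fin_two_of]
  ring

lemma measurable_aff (α β γ δ : ℝ) : Measurable (aff α β γ δ) := by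
  have : (aff α β γ δ : ℝ × ℝ → ℝ × ℝ) = fun q => (α * q.1 + β * q.2 + γ, δ * q.2) := rfl
  rw [this]; fun_prop

lemma map_aff (α β γ δ : ℝ) (hα : 0 < α) (hδ : 0 < δ) :
    Measure.map (aff α β γ δ) volume = ENNReal.ofReal (α * δ)⁻¹ • (volume : Measure (ℝ × ℝ)) := by
  have h1 : (aff α β γ δ : ℝ × ℝ → ℝ × ℝ) = (fun q => q + (γ, 0)) ∘ (affL α β δ) := by
    ext q <;> simp [aff_apply, affL]
  have hd := det_affL α β δ
  have hpos : 0 < α * δ := by positivity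
  have hm : Measurable (affL α β δ) := by
    have : (affL α β δ : ℝ × ℝ → ℝ × ℝ) = fun q => (α * q.1 + β * q.2, δ * q.2) := rfl
    rw [this]; fun_prop
  rw [h1, ← Measure.map_map (by fun_prop) hm,
    Measure.map_linearMap_addHaar_eq_smul_addHaar _ (by rw [hd]; exact hpos.ne'), hd,
    abs_of_pos (by positivity), Measure.map_smul, map_add_right_eq_self]

lemma mp_aff (α β γ δ : ℝ) (hα : 0 < α) (hδ : 0 < δ) (hsub : aff α β γ δ ⁻¹' T0 ⊆ T0) :
    MeasurePreserving (aff α β γ δ) (μT.restrict (aff α β γ δ ⁻¹' T0))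
      (ENNReal.ofReal (α * δ)⁻¹ • μT) := by
  refine ⟨measurable_aff _ _ _ _, ?_⟩
  rw [muT_eq, Measure.restrict_smul,
    Measure.restrict_restrict (measurable_aff _ _ _ _ measurableSet_T0),
    Set.inter_eq_left.2 hsub, Measure.map_smul,
    ← Measure.restrict_map (measurable_aff _ _ _ _) measurableSet_T0, map_aff _ _ _ _ hα hδ,
    Measure.restrict_smul, smul_comm]

lemma real_aff (α β γ δ : ℝ) (hα : 0 < α) (hδ : 0 < δ) (hsub : aff α β γ δ ⁻¹' T0 ⊆ T0) :
    μT.real (aff α β γ δ ⁻¹' T0) = (α * δ)⁻¹ := by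
  have h := (mp_aff α β γ δ hα hδ hsub).measure_preimage (s := Set.univ)
    MeasurableSet.univ.nullMeasurableSet
  simp only [Set.preimage_univ, Measure.restrict_apply_univ, Measure.smul_apply, measure_univ,
    smul_eq_mul, mul_one] at h
  rw [measureReal_def, h, ENNReal.toReal_ofReal (by positivity)]

/-- area of the next triangle -/
def cp (p : ℝ × ℝ) : ℝ := p.2 * (1 - p.1 - p.2) / (1 - p.2)
/-- area of the rest -/
def rp (p : ℝ × ℝ) : ℝ := 1 - p.1 - p.2

lemma T0_pos {p : ℝ × ℝ} (hp : p ∈ T0) : 0 < 1 - p.2 ∧ 0 < 1 - p.1 - p.2 ∧ 0 < p.2 := by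
  obtain ⟨h1, h2, h3⟩ := hp
  refine ⟨by linarith, by linarith, h2⟩

lemma phi_mp {p : ℝ × ℝ} (hp : p ∈ T0) :
    MeasurePreserving (phi p) (μT.restrict (phi p ⁻¹' T0)) (ENNReal.ofReal (cp p) • μT) := by
  obtain ⟨h1, h2, h3⟩ := T0_pos hp
  have := mp_aff ((1 - p.2) / (1 - p.1 - p.2)) (p.1 / (1 - p.1 - p.2))
    (-p.1 / (1 - p.1 - p.2)) (1 / p.2) (by positivity) (by positivity)
    (fun q hq => (phi_pre hp hq).1)
  have hc : cp p = ((1 - p.2) / (1 - p.1 - p.2) * (1 / p.2))⁻¹ := by unfold cp; field_simp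
  rw [hc]
  exact this

lemma real_phi {p : ℝ × ℝ} (hp : p ∈ T0) : μT.real (phi p ⁻¹' T0) = cp p := by
  obtain ⟨h1, h2, h3⟩ := T0_pos hp
  have := real_aff ((1 - p.2) / (1 - p.1 - p.2)) (p.1 / (1 - p.1 - p.2))
    (-p.1 / (1 - p.1 - p.2)) (1 / p.2) (by positivity) (by positivity)
    (fun q hq => (phi_pre hp hq).1)
  have hc : cp p = ((1 - p.2) / (1 - p.1 - p.2) * (1 / p.2))⁻¹ := by unfold cp; field_simp
  rw [hc]
  exact this

lemma real_R {p : ℝ × ℝ} (hp : p ∈ T0) : μT.real (T0 ∩ Rgt p) = (1 - p.1 - p.2) / (1 - p.2) := by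
  obtain ⟨h1, h2, h3⟩ := T0_pos hp
  have hp1 := hp.1
  have key : aff ((1 - p.2) / (1 - p.1 - p.2)) (p.1 / (1 - p.1 - p.2))
      (-p.1 / (1 - p.1 - p.2)) 1 ⁻¹' T0 = T0 ∩ Rgt p := by
    ext q
    have e : (1 - p.2) / (1 - p.1 - p.2) * q.1 + p.1 / (1 - p.1 - p.2) * q.2
        + -p.1 / (1 - p.1 - p.2) = (q.1 * (1 - p.2) - p.1 * (1 - q.2)) / (1 - p.1 - p.2) := by ring
    simp only [Set.mem_preimage, aff_apply, T0, Rgt, Set.mem_inter_iff, Set.mem_ofPred_eq, e,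
      one_mul]
    rw [← lt_sub_iff_add_lt, div_lt_iff₀ h2, div_pos_iff_of_pos_right h2]
    constructor
    · rintro ⟨g1, g2, g3⟩
      have g4 : q.1 + q.2 < 1 := by nlinarith
      refine ⟨⟨?_, g2, g4⟩, by linarith⟩
      by_contra hcon
      have : 0 < (1 - q.2) * (1 - p.1 - p.2) := by linarith
      have : 0 < 1 - q.2 := pos_of_mul_pos_left this h2.le
      nlinarith
    · rintro ⟨⟨g1, g2, g3⟩, g4⟩
      refine ⟨by linarith, g2, by nlinarith⟩
  have := real_aff ((1 - p.2) / (1 - p.1 - p.2)) (p.1 / (1 - p.1 - p.2))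
    (-p.1 / (1 - p.1 - p.2)) 1 (by positivity) (by positivity)
    (by rw [key]; exact Set.inter_subset_left)
  rw [key] at this
  rw [this]; field_simp

lemma measurable_phi (p : ℝ × ℝ) : Measurable (phi p) := measurable_aff _ _ _ _

lemma real_B {p : ℝ × ℝ} (hp : p ∈ T0) : μT.real ((T0 ∩ Rgt p) \ (phi p ⁻¹' T0)) = rp p := by
  obtain ⟨h1, h2, h3⟩ := T0_pos hp
  have hsub : phi p ⁻¹' T0 ⊆ T0 ∩ Rgt p := fun q hq => phi_pre hp hq
  rw [measureReal_sdiff hsub (measurable_phi p measurableSet_T0),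
    real_R hp, real_phi hp]
  unfold cp rp
  field_simp

/-- generating function for a general index type -/
def Gv (ι : Type) [Fintype ι] (t : ℝ) : ℝ := ∫ ω, t ^ (Nv ω) ∂(Measure.pi fun _ : ι => μT)

lemma Gv_equiv {ι κ : Type} [Fintype ι] [Fintype κ] (e : ι ≃ κ) (t : ℝ) : Gv ι t = Gv κ t := by
  unfold Gv
  have h := (measurePreserving_piCongrLeft (fun _ : κ => μT) e).symm.integral_comp'
    (g := fun ω => t ^ Nv ω)
  rw [← h]
  refine integral_congr_ae (Filter.Eventually.of_forall fun ω => ?_)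
  simp only
  congr 1
  rw [← Nv_equiv e]
  rfl

lemma meas_tN {ι : Type*} [Fintype ι] (t : ℝ) : Measurable (fun ω : ι → ℝ × ℝ => t ^ Nv ω) :=
  (measurable_of_countable (fun n : ℕ => t ^ n)).comp measurable_Nv

lemma bound_tN {ι : Type*} [Fintype ι] (t : ℝ) (ω : ι → ℝ × ℝ) :
    |t ^ Nv ω| ≤ (1 + |t|) ^ Fintype.card ι := by
  rw [abs_pow]
  calc |t| ^ Nv ω ≤ (1 + |t|) ^ Nv ω := by gcongr; linarith
    _ ≤ _ := pow_le_pow_right₀ (by linarith [abs_nonneg t]) (Nv_le ω)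

lemma pi_smul_const {ι : Type} [Fintype ι] (r : ℝ) :
    (Measure.pi fun _ : ι => ENNReal.ofReal r • μT) =
      (ENNReal.ofReal r) ^ (Fintype.card ι) • Measure.pi fun _ : ι => μT := by
  have : IsFiniteMeasure (ENNReal.ofReal r • μT) := Measure.smul_finite _ ENNReal.ofReal_ne_top
  refine Measure.pi_eq fun s _ => ?_
  simp [Measure.pi_pi, Finset.prod_mul_distrib]

lemma int_A {ι : Type} [Fintype ι] {p : ℝ × ℝ} (hp : p ∈ T0) (t : ℝ) :
    ∫ η in (Set.univ.pi fun _ : ι => phi p ⁻¹' T0), t ^ (1 + Nv (fun k => phi p (η k)))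
      ∂(Measure.pi fun _ : ι => μT) = t * (cp p ^ Fintype.card ι * Gv ι t) := by
  obtain ⟨h1, h2, h3⟩ := T0_pos hp
  have : IsFiniteMeasure (ENNReal.ofReal (cp p) • μT) :=
    Measure.smul_finite _ ENNReal.ofReal_ne_top
  have hc : 0 ≤ cp p := by unfold cp; positivity
  rw [Measure.restrict_pi_pi]
  have hmp := measurePreserving_pi (fun _ : ι => μT.restrict (phi p ⁻¹' T0))
    (fun _ : ι => ENNReal.ofReal (cp p) • μT) (fun _ => phi_mp hp)
  have := integral_map (μ := Measure.pi fun _ : ι => μT.restrict (phi p ⁻¹' T0))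
    hmp.measurable.aemeasurable (f := fun ω : ι → ℝ × ℝ => t ^ (1 + Nv ω))
    (by simp_rw [pow_add]; exact ((meas_tN t).const_mul _).aestronglyMeasurable)
  rw [hmp.map_eq] at this
  rw [← this, pi_smul_const, integral_smul_measure]
  simp_rw [pow_add, pow_one]
  rw [integral_const_mul, ENNReal.toReal_pow, ENNReal.toReal_ofReal hc, smul_eq_mul]
  unfold Gv
  ring

lemma int_J {m : ℕ} {p : ℝ × ℝ} (hp : p ∈ T0) (t : ℝ) (J : Finset (Fin m)) :
    ∫ ω, (Set.univ.pi fun _ : {k // k ∈ J} => phi p ⁻¹' T0).indicator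
        (fun η => t ^ (1 + Nv (fun k => phi p (η k)))) (fun k => ω k) *
      (Set.univ.pi fun _ : {k // ¬ k ∈ J} => (T0 ∩ Rgt p) \ phi p ⁻¹' T0).indicator 1 (fun k => ω k)
      ∂(Measure.pi fun _ : Fin m => μT)
    = t * (cp p ^ J.card * Gv (Fin J.card) t) * rp p ^ (m - J.card) := by
  have hmR : MeasurableSet (Rgt p) := by
    unfold Rgt
    exact measurableSet_lt (by fun_prop) (by fun_prop)
  have hmB : MeasurableSet ((T0 ∩ Rgt p) \ phi p ⁻¹' T0) :=
    (measurableSet_T0.inter hmR).diff (measurable_phi p measurableSet_T0)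
  have h := (measurePreserving_piEquivPiSubtypeProd (fun _ : Fin m => μT) (· ∈ J)).integral_comp'
    (g := fun z => (Set.univ.pi fun _ : {k // k ∈ J} => phi p ⁻¹' T0).indicator
        (fun η => t ^ (1 + Nv (fun k => phi p (η k)))) z.1 *
      (Set.univ.pi fun _ : {k // ¬ k ∈ J} => (T0 ∩ Rgt p) \ phi p ⁻¹' T0).indicator 1 z.2)
  refine Eq.trans h ?_
  rw [integral_prod_mul
    (f := fun η => (Set.univ.pi fun _ : {k // k ∈ J} => phi p ⁻¹' T0).indicator
        (fun η => t ^ (1 + Nv (fun k => phi p (η k)))) η)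
    (g := fun η => (Set.univ.pi fun _ : {k // ¬ k ∈ J} =>
      (T0 ∩ Rgt p) \ phi p ⁻¹' T0).indicator 1 η)]
  have hA : ∀ i1 i2 : Fintype {k // k ∈ J},
      ∫ η in (Set.univ.pi fun _ : {k // k ∈ J} => phi p ⁻¹' T0),
      t ^ (1 + @Nv _ i1 (fun k => phi p (η k))) ∂(@Measure.pi _ _ i2 _ fun _ : {k // k ∈ J} => μT)
      = t * (cp p ^ J.card * Gv (Fin J.card) t) := by
    intro i1 i2
    obtain rfl : i1 = FinsetCoe.fintype J := Subsingleton.elim _ _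
    obtain rfl : i2 = FinsetCoe.fintype J := Subsingleton.elim _ _
    rw [int_A hp, Fintype.card_coe, Gv_equiv J.equivFin]
  rw [integral_indicator (MeasurableSet.univ_pi fun _ => measurable_phi p measurableSet_T0),
    hA, integral_indicator_one (MeasurableSet.univ_pi fun _ => hmB)]
  rw [measureReal_def, Measure.pi_pi, ENNReal.toReal_prod]
  simp_rw [← measureReal_def, real_B hp]
  rw [Finset.prod_const, Finset.card_univ, Fintype.card_subtype_compl, Fintype.card_coe,
    Fintype.card_fin]

lemma inner_int {m : ℕ} (i : Fin (m + 1)) {p : ℝ × ℝ} (hp : p ∈ T0) (t : ℝ) :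
    ∫ ω, {ω : Fin m → ℝ × ℝ | ∀ j, ω j ∈ Rgt p}.indicator
        (fun ω => t ^ Nv (i.insertNth p ω : Fin (m + 1) → ℝ × ℝ)) ω
      ∂(Measure.pi fun _ : Fin m => μT)
    = t * ∑ j ∈ Finset.range (m + 1), (m.choose j : ℝ) *
        (cp p ^ j * rp p ^ (m - j) * Gv (Fin j) t) := by
  classical
  have hmR : MeasurableSet (Rgt p) := by
    unfold Rgt
    exact measurableSet_lt (by fun_prop) (by fun_prop)
  have hmB : MeasurableSet ((T0 ∩ Rgt p) \ phi p ⁻¹' T0) :=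
    (measurableSet_T0.inter hmR).diff (measurable_phi p measurableSet_T0)
  have hae : ∀ᵐ ω ∂(Measure.pi fun _ : Fin m => μT), ∀ j, ω j ∈ T0 := by
    rw [ae_all_iff]
    intro j
    exact (Measure.tendsto_eval_ae_ae (μ := fun _ : Fin m => μT) (i := j)).eventually ae_T0
  have h1 : ∫ ω, {ω : Fin m → ℝ × ℝ | ∀ j, ω j ∈ Rgt p}.indicator
        (fun ω => t ^ Nv (i.insertNth p ω : Fin (m + 1) → ℝ × ℝ)) ω
      ∂(Measure.pi fun _ : Fin m => μT) =
      ∫ ω, ∑ J ∈ (Finset.univ : Finset (Fin m)).powerset,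
        (Set.univ.pi fun _ : {k // k ∈ J} => phi p ⁻¹' T0).indicator
        (fun η => t ^ (1 + Nv (fun k => phi p (η k)))) (fun k => ω k) *
      (Set.univ.pi fun _ : {k // ¬ k ∈ J} => (T0 ∩ Rgt p) \ phi p ⁻¹' T0).indicator 1 (fun k => ω k)
      ∂(Measure.pi fun _ : Fin m => μT) := by
    refine integral_congr_ae ?_
    filter_upwards [hae] with ω hω
    by_cases hr : ∀ j, ω j ∈ Rgt p
    · rw [Set.indicator_of_mem (by exact hr)]
      set J0 : Finset (Fin m) := Finset.univ.filter fun j => phi p (ω j) ∈ T0 with hJ0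
      have hJ0m : ∀ j, j ∈ J0 ↔ phi p (ω j) ∈ T0 := by intro j; simp [hJ0]
      rw [Finset.sum_eq_single J0]
      · rw [Nv_rec i p hp ω hω hr J0 hJ0m, Set.indicator_of_mem, Set.indicator_of_mem]
        · simp
        · intro k _
          exact ⟨⟨hω k, hr k⟩, fun h => k.2 ((hJ0m _).2 h)⟩
        · intro k _
          exact (hJ0m _).1 k.2
      · intro J _ hJ
        by_contra hcon
        apply hJ
        obtain ⟨g1, g2⟩ := mul_ne_zero_iff.1 hcon
        have g1 := Set.mem_of_indicator_ne_zero g1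
        have g2 := Set.mem_of_indicator_ne_zero g2
        ext j
        rw [hJ0m]
        constructor
        · intro hj; exact g1 ⟨j, hj⟩ trivial
        · intro hj
          by_contra hj2
          exact (g2 ⟨j, hj2⟩ trivial).2 hj
      · intro h; simp at h
    · rw [Set.indicator_of_notMem (by exact hr)]
      symm
      apply Finset.sum_eq_zero
      intro J _
      by_contra hcon
      apply hr
      obtain ⟨g1, g2⟩ := mul_ne_zero_iff.1 hcon
      have g1 := Set.mem_of_indicator_ne_zero g1
      have g2 := Set.mem_of_indicator_ne_zero g2
      intro j
      by_cases hj : j ∈ J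
      · exact (phi_pre hp (g1 ⟨j, hj⟩ trivial)).2
      · exact (g2 ⟨j, hj⟩ trivial).1.2
  rw [h1, integral_finsetSum]
  · simp_rw [int_J hp]
    rw [Finset.sum_powerset_apply_card
      (fun j => t * (cp p ^ j * Gv (Fin j) t) * rp p ^ (m - j))]
    simp only [Finset.card_univ, Fintype.card_fin, nsmul_eq_mul]
    rw [Finset.mul_sum]
    refine Finset.sum_congr rfl fun j _ => by ring
  · intro J _
    have hb : ∀ ω : Fin m → ℝ × ℝ, ‖(Set.univ.pi fun _ : {k // k ∈ J} => phi p ⁻¹' T0).indicator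
        (fun η => t ^ (1 + Nv (fun k => phi p (η k)))) (fun k => ω k) *
      (Set.univ.pi fun _ : {k // ¬ k ∈ J} => (T0 ∩ Rgt p) \ phi p ⁻¹' T0).indicator 1 (fun k => ω k)‖
        ≤ (|t| * (1 + |t|) ^ Fintype.card {k // k ∈ J}) * 1 := by
      intro ω
      rw [norm_mul]
      gcongr
      · refine (norm_indicator_le_norm_self _ _).trans ?_
        rw [pow_add, pow_one, norm_mul]
        exact mul_le_mul_of_nonneg_left (bound_tN t _) (abs_nonneg t)
      · refine (norm_indicator_le_norm_self _ _).trans ?_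
        simp
    refine Integrable.of_bound (Measurable.aestronglyMeasurable ?_) _ (Filter.Eventually.of_forall hb)
    have g1 : Measurable (fun η : {k // k ∈ J} → ℝ × ℝ => t ^ (1 + Nv (fun k => phi p (η k)))) := by
      simp_rw [pow_add]
      refine Measurable.const_mul ?_ _
      refine (meas_tN t).comp ?_
      exact measurable_pi_lambda _ fun k => (measurable_phi p).comp (measurable_pi_apply k)
    have g2 := g1.indicator (s := Set.univ.pi fun _ : {k // k ∈ J} => phi p ⁻¹' T0)
      (MeasurableSet.univ_pi fun _ => measurable_phi p measurableSet_T0)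
    have g3 : Measurable ((Set.univ.pi fun _ : {k // ¬ k ∈ J} =>
        (T0 ∩ Rgt p) \ phi p ⁻¹' T0).indicator (1 : ({k // ¬ k ∈ J} → ℝ × ℝ) → ℝ)) :=
      Measurable.indicator measurable_one (MeasurableSet.univ_pi fun _ => hmB)
    exact (g2.comp (measurable_pi_lambda (fun (ω : Fin m → ℝ × ℝ) (k : {k // k ∈ J}) => ω k)
      fun k => measurable_pi_apply _)).mul
      (g3.comp (measurable_pi_lambda (fun (ω : Fin m → ℝ × ℝ) (k : {k // ¬ k ∈ J}) => ω k)
      fun k => measurable_pi_apply _))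

lemma beta_int (j k : ℕ) : ∫ y in (0 : ℝ)..1, y ^ j * (1 - y) ^ k =
    (j.factorial * k.factorial : ℝ) / ((j + k + 1).factorial : ℝ) := by
  induction k generalizing j with
  | zero =>
    simp only [pow_zero, mul_one, integral_pow, Nat.factorial_zero, add_zero, Nat.factorial_succ]
    push_cast
    have := Nat.factorial_ne_zero j
    field_simp
    simp
  | succ k ih =>
    have h := intervalIntegral.integral_mul_deriv_eq_deriv_mul (a := 0) (b := 1)
      (u := fun y : ℝ => (1 - y) ^ (k + 1)) (u' := fun y : ℝ => -((k + 1 : ℝ) * (1 - y) ^ k))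
      (v := fun y : ℝ => y ^ (j + 1) / (j + 1)) (v' := fun y : ℝ => y ^ j)
      (by
        intro y _
        have := ((hasDerivAt_id y).const_sub 1).pow (k + 1)
        convert this using 1
        · rfl
        · push_cast
          simp only [id, Nat.add_sub_cancel]
          ring)
      (by
        intro y _
        have := (hasDerivAt_pow (j + 1) y).div_const ((j : ℝ) + 1)
        convert this using 1
        have : (j : ℝ) + 1 ≠ 0 := by positivity
        push_cast
        field_simp)
      (Continuous.intervalIntegrable (by fun_prop) _ _)
      (Continuous.intervalIntegrable (by fun_prop) _ _)
    have e1 : ∫ y in (0 : ℝ)..1, y ^ j * (1 - y) ^ (k + 1) =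
        ∫ y in (0 : ℝ)..1, (1 - y) ^ (k + 1) * y ^ j := by
      congr 1; ext y; ring
    have e2 : ∫ y in (0 : ℝ)..1, -((k + 1 : ℝ) * (1 - y) ^ k) * (y ^ (j + 1) / (j + 1)) =
        (-((k + 1 : ℝ) / (j + 1))) * ∫ y in (0 : ℝ)..1, y ^ (j + 1) * (1 - y) ^ k := by
      rw [← intervalIntegral.integral_const_mul]
      congr 1; ext y; ring
    rw [e1, h, e2, ih (j + 1)]
    have e3 : j + 1 + k + 1 = j + (k + 1) + 1 := by ring
    rw [e3]
    simp only [Nat.factorial_succ j, Nat.factorial_succ k]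
    have : (j : ℝ) + 1 ≠ 0 := by positivity
    push_cast
    simp
    field_simp

lemma T0_bd {p : ℝ × ℝ} (hp : p ∈ T0) : 0 ≤ cp p ∧ cp p ≤ 1 ∧ 0 ≤ rp p ∧ rp p ≤ 1 := by
  obtain ⟨h1, h2, h3⟩ := T0_pos hp
  have h4 : 0 < p.1 := hp.1
  unfold cp rp
  refine ⟨by positivity, ?_, h2.le, by linarith⟩
  rw [div_le_one h1]
  nlinarith

lemma measurable_cp : Measurable cp := by unfold cp; fun_prop

lemma measurable_rp : Measurable rp := by unfold rp; fun_prop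

lemma outer_bd (j k : ℕ) : ∀ p ∈ T0, ‖cp p ^ j * rp p ^ k‖ ≤ 1 := by
  intro p hp
  obtain ⟨h1, h2, h3, h4⟩ := T0_bd hp
  rw [Real.norm_of_nonneg (by positivity)]
  exact mul_le_one₀ (pow_le_one₀ h1 h2) (by positivity) (pow_le_one₀ h3 h4)

lemma outer_integrable (j k : ℕ) : Integrable (fun p => cp p ^ j * rp p ^ k) μT := by
  refine Integrable.of_bound ((measurable_cp.pow_const j).mul
    (measurable_rp.pow_const k)).aestronglyMeasurable 1 ?_
  filter_upwards [ae_T0] with p hp using outer_bd j k p hp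

lemma outer_int (m j : ℕ) (hj : j ≤ m) : ∫ p, cp p ^ j * rp p ^ (m - j) ∂μT =
    2 / ((m : ℝ) + 1) * ((j.factorial * (m + 1 - j).factorial : ℝ) / ((m + 2).factorial : ℝ)) := by
  rw [int_muT]
  · have hin : ∀ y ∈ Set.Ioo (0 : ℝ) 1, ∫ x in (0 : ℝ)..(1 - y),
        cp (x, y) ^ j * rp (x, y) ^ (m - j) = 1 / ((m : ℝ) + 1) * (y ^ j * (1 - y) ^ (m + 1 - j)) := by
      intro y hy
      have hy1 : 0 < 1 - y := by linarith [hy.2]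
      have : ∀ x : ℝ, cp (x, y) ^ j * rp (x, y) ^ (m - j) =
          (y / (1 - y)) ^ j * (1 - y - x) ^ m := by
        intro x
        unfold cp rp
        simp only
        rw [show y * (1 - x - y) / (1 - y) = (y / (1 - y)) * (1 - y - x) by ring, mul_pow,
          show 1 - x - y = 1 - y - x by ring, mul_assoc, ← pow_add, Nat.add_sub_cancel' hj]
      simp_rw [this]
      rw [intervalIntegral.integral_const_mul,
        intervalIntegral.integral_comp_sub_left (fun x => x ^ m), integral_pow]
      rw [show m + 1 - j = (m + 1) - j from rfl, pow_sub₀ _ hy1.ne' (by omega)]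
      have : (m : ℝ) + 1 ≠ 0 := by positivity
      simp
      field_simp
      rw [← mul_pow, div_mul_cancel₀ _ hy1.ne']
    have : ∫ y in (0 : ℝ)..1, ∫ x in (0 : ℝ)..(1 - y), cp (x, y) ^ j * rp (x, y) ^ (m - j) =
        ∫ y in (0 : ℝ)..1, 1 / ((m : ℝ) + 1) * (y ^ j * (1 - y) ^ (m + 1 - j)) := by
      rw [intervalIntegral.integral_of_le zero_le_one, intervalIntegral.integral_of_le zero_le_one,
        integral_Ioc_eq_integral_Ioo, integral_Ioc_eq_integral_Ioo]
      exact setIntegral_congr_fun measurableSet_Ioo hin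
    rw [this, intervalIntegral.integral_const_mul, beta_int,
      show j + (m + 1 - j) + 1 = m + 2 by omega]
    ring
  · have hfin : IsFiniteMeasure (volume.restrict T0) :=
      ⟨by rw [Measure.restrict_apply_univ, vol_T0]; exact ENNReal.ofReal_lt_top⟩
    refine Integrable.of_bound ((measurable_cp.pow_const j).mul
      (measurable_rp.pow_const _)).aestronglyMeasurable 1 ?_
    filter_upwards [ae_restrict_mem measurableSet_T0] with p hp using outer_bd j _ p hp

lemma ae_all_T0 (n : ℕ) : ∀ᵐ ω ∂(Measure.pi fun _ : Fin n => μT), ∀ j, ω j ∈ T0 := by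
  rw [ae_all_iff]
  intro j
  exact (Measure.tendsto_eval_ae_ae (μ := fun _ : Fin n => μT) (i := j)).eventually ae_T0

lemma ae_noties {n : ℕ} (i j : Fin n) (hij : i ≠ j) : ∀ᵐ ω ∂(Measure.pi fun _ : Fin n => μT),
    (ω i).1 * (1 - (ω j).2) ≠ (ω j).1 * (1 - (ω i).2) := by
  obtain _ | n := n
  · exact i.elim0
  obtain ⟨j, rfl⟩ := Fin.exists_succAbove_eq hij.symm
  have hmp := measurePreserving_piFinSuccAbove (fun _ : Fin (n + 1) => μT) i
  have key : ∀ᵐ z ∂(μT.prod (Measure.pi fun _ : Fin n => μT)),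
      z.1.1 * (1 - (z.2 j).2) ≠ (z.2 j).1 * (1 - z.1.2) := by
    rw [Measure.ae_prod_iff_ae_ae]
    · filter_upwards [ae_T0] with p hp
      refine (Measure.tendsto_eval_ae_ae (μ := fun _ : Fin n => μT) (i := j)).eventually
        (p := fun q => p.1 * (1 - q.2) ≠ q.1 * (1 - p.2)) ?_
      rw [ae_iff]
      refine measure_mono_null ?_ (muT_line (1 - p.2) p.1 p.1 hp.1.ne')
      intro q hq
      simp only [ne_eq, not_not, Set.mem_ofPred_eq] at hq ⊢
      linarith
    · refine (measurableSet_eq_fun ?_ ?_).compl <;> fun_prop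
  exact hmp.quasiMeasurePreserving.ae key

lemma ae_good (n : ℕ) : ∀ᵐ ω ∂(Measure.pi fun _ : Fin n => μT),
    ∀ i j, i ≠ j → (ω i).1 * (1 - (ω j).2) ≠ (ω j).1 * (1 - (ω i).2) := by
  rw [ae_all_iff]; intro i
  rw [ae_all_iff]; intro j
  by_cases h : i = j
  · exact Filter.Eventually.of_forall fun _ h' => (h' h).elim
  · filter_upwards [ae_noties i j h] with ω hω _ using hω

lemma G_eq_Gv (n : ℕ) (t : ℝ) : G n t = Gv (Fin n) t := by
  unfold G Gv P
  refine integral_congr_ae ?_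
  filter_upwards [ae_all_T0 n, ae_good n] with ω h1 h2
  rw [N_eq_Nv n ω _ h1]
  intro i j hij
  by_contra hne
  exact h2 i j hne (by rw [hij])

/-- the event that point `i` has minimal direction -/
def Emin {n : ℕ} (i : Fin n) : Set (Fin n → ℝ × ℝ) := {ω | ∀ j, j ≠ i → ω j ∈ Rgt (ω i)}

lemma measurableSet_Emin {n : ℕ} (i : Fin n) : MeasurableSet (Emin i) := by
  unfold Emin Rgt
  simp only [Set.mem_ofPred_eq]
  refine measurableSet_setOfPred.2 ?_
  refine Measurable.forall fun j => Measurable.imp measurable_const ?_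
  refine measurableSet_setOfPred.1 (measurableSet_lt ?_ ?_) <;> fun_prop

lemma Emin_sum {n : ℕ} (ω : Fin (n + 1) → ℝ × ℝ) (h1 : ∀ j, ω j ∈ T0)
    (h2 : ∀ i j, i ≠ j → (ω i).1 * (1 - (ω j).2) ≠ (ω j).1 * (1 - (ω i).2)) (x : ℝ) :
    x = ∑ i, (Emin i).indicator (fun _ => x) ω := by
  obtain ⟨i, hi⟩ := Finite.exists_min (fun i => (ω i).1 / (1 - (ω i).2))
  have hmem : ω ∈ Emin i := by
    intro j hj
    have := hi j
    rw [div_le_div_iff₀ (T0_pos (h1 i)).1 (T0_pos (h1 j)).1] at this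
    exact lt_of_le_of_ne this (h2 i j hj.symm)
  rw [Finset.sum_eq_single i]
  · rw [Set.indicator_of_mem hmem]
  · intro j _ hj
    rw [Set.indicator_of_notMem]
    intro hjm
    have g1 : (ω i).1 * (1 - (ω j).2) < (ω j).1 * (1 - (ω i).2) := hmem j hj
    have g2 : (ω j).1 * (1 - (ω i).2) < (ω i).1 * (1 - (ω j).2) := hjm i hj.symm
    exact lt_asymm g1 g2
  · intro h; simp at h

lemma int_Emin {m : ℕ} (i : Fin (m + 1)) (t : ℝ) :
    ∫ ω, (Emin i).indicator (fun ω => t ^ Nv ω) ω ∂(Measure.pi fun _ : Fin (m + 1) => μT) =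
    ∫ p, t * ∑ j ∈ Finset.range (m + 1), (m.choose j : ℝ) *
        (cp p ^ j * rp p ^ (m - j) * Gv (Fin j) t) ∂μT := by
  have hmp := (measurePreserving_piFinSuccAbove (fun _ : Fin (m + 1) => μT) i).symm
  have hmeas : Measurable ((Emin i).indicator (fun ω => t ^ Nv ω)) :=
    (meas_tN t).indicator (measurableSet_Emin i)
  rw [← hmp.integral_comp', integral_prod]
  · refine integral_congr_ae ?_
    filter_upwards [ae_T0] with p hp
    rw [← inner_int i hp]
    congr 1
    ext ω
    change (Emin i).indicator (fun ω => t ^ Nv ω) (i.insertNth p ω : Fin (m + 1) → ℝ × ℝ) = _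
    have hiff : (i.insertNth p ω : Fin (m + 1) → ℝ × ℝ) ∈ Emin i ↔ ∀ j, ω j ∈ Rgt p := by
      constructor
      · intro h j
        have := h (i.succAbove j) (Fin.succAbove_ne i j)
        simpa using this
      · intro h j hj
        obtain ⟨k, rfl⟩ := Fin.exists_succAbove_eq hj
        simpa using h k
    by_cases h : ∀ j, ω j ∈ Rgt p
    · rw [Set.indicator_of_mem (hiff.2 h), Set.indicator_of_mem (by exact h)]
    · rw [Set.indicator_of_notMem (mt hiff.1 h), Set.indicator_of_notMem (by exact h)]
  · refine Integrable.of_bound ((hmeas.comp (MeasurableEquiv.measurable _)).aestronglyMeasurable)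
      ((1 + |t|) ^ Fintype.card (Fin (m + 1))) (Filter.Eventually.of_forall fun z => ?_)
    exact (norm_indicator_le_norm_self _ _).trans (bound_tN t _)

lemma Gv_rec (m : ℕ) (t : ℝ) : Gv (Fin (m + 1)) t = 2 * t / (((m : ℝ) + 1) * (m + 2)) *
      ∑ j ∈ Finset.range (m + 1), ((m : ℝ) + 1 - j) * Gv (Fin j) t := by
  have h1 : Gv (Fin (m + 1)) t = ∫ ω, ∑ i, (Emin i).indicator (fun ω => t ^ Nv ω) ω
      ∂(Measure.pi fun _ : Fin (m + 1) => μT) := by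
    unfold Gv
    refine integral_congr_ae ?_
    filter_upwards [ae_all_T0 (m + 1), ae_good (m + 1)] with ω h1 h2
    exact Emin_sum ω h1 h2 (t ^ Nv ω)
  rw [h1, integral_finsetSum]
  · simp_rw [int_Emin]
    rw [Finset.sum_const, Finset.card_univ, Fintype.card_fin, nsmul_eq_mul, integral_const_mul,
      integral_finsetSum]
    · simp_rw [Finset.mul_sum]
      refine Finset.sum_congr rfl fun j hj => ?_
      have hj' : j ≤ m := Nat.lt_succ_iff.1 (Finset.mem_range.1 hj)
      rw [integral_const_mul, integral_mul_const, outer_int m j hj']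
      rw [Nat.choose_eq_factorial_div_factorial hj', Nat.cast_div
        (Nat.factorial_mul_factorial_dvd_factorial hj') (by positivity)]
      rw [show m + 1 - j = (m - j) + 1 by omega]
      simp only [Nat.factorial_succ]
      push_cast [Nat.cast_sub hj']
      have := Nat.factorial_ne_zero j
      have := Nat.factorial_ne_zero m
      have := Nat.factorial_ne_zero (m - j)
      field_simp
      ring
    · intro j _
      exact ((outer_integrable j (m - j)).mul_const _).const_mul _
  · intro i _
    refine Integrable.of_bound (((meas_tN t).indicator (measurableSet_Emin i)).aestronglyMeasurable)
      ((1 + |t|) ^ Fintype.card (Fin (m + 1))) (Filter.Eventually.of_forall fun z => ?_)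
    exact (norm_indicator_le_norm_self _ _).trans (bound_tN t _)

lemma Gv_zero (t : ℝ) : Gv (Fin 0) t = 1 := by
  unfold Gv
  simp [Nv]

/-- exact formula for the probability generating function `G_n`. -/
theorem stmt10 (n : ℕ) (hn : 1 ≤ n) (t : ℝ) :
    (G n t = 1 + ∑ l ∈ Finset.Icc 1 n, (-1 : ℝ) ^ l * (n.choose l : ℝ) *
        ∏ i ∈ Finset.Icc 1 l, (1 - 2 * t / ((i : ℝ) * ((i : ℝ) + 1)))) ∧
    (G n t = ∑ k ∈ Finset.Icc 1 n, t ^ k *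
        ∑ l ∈ Finset.Icc k n, (-1 : ℝ) ^ (l + k) * (n.choose l : ℝ) * c k l) := by
  refine final_alg n hn t (G n t) ?_
  rw [G_eq_Gv]
  exact alg (fun k => Gv (Fin k) t) t (Gv_zero t) (fun m => Gv_rec m t) n

end
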